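/- Let k be a field, K/k a field extension, and 𝒳 a separated integral scheme of finite type over k equipped with a k-morphism η : Spec K → 𝒳 whose image is the generic point of 𝒳. Let X be the set of valuation subrings O of K with k ⊆ O such that η extends to a k-morphism Spec O → 𝒳 (i.e. O has a center on 𝒳). Then there exists a finitely generated k-subalgebra A ⊆ K with X = {O : O is a valuation subring of K, k ⊆ O, A ⊆ O} if and only if the normalization of 𝒳 admits a proper k-morphism to an affine k-scheme of finite type. -/

import Mathlib

open AlgebraicGeometry CategoryTheory

noncomputable section

/-- `ν : T ⟶ S` is the normalization of the integral scheme `S`: `T` is an integral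
scheme that is normal (all its local rings are integrally closed domains), `ν` is an
integral morphism (affine and universally closed), and `ν` is birational (it sends
the generic point to the generic point and induces an isomorphism on stalks there). -/
def IsNormalization {T S : Scheme}
    [AlgebraicGeometry.IsIntegral T] [AlgebraicGeometry.IsIntegral S]
    (ν : T ⟶ S) : Prop :=
  (∀ x : T.carrier, IsIntegrallyClosed (T.presheaf.stalk x)) ∧
    IsAffineHom ν ∧ UniversallyClosed ν ∧
    ν.base (genericPoint T) = genericPoint S ∧
    IsIso (ν.stalkMap (genericPoint T))


theorem FN_torsionless {P C : Type*} [CommRing P] [IsDomain P] [IsNoetherianRing P]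
    [AddCommGroup C] [Module P C] (S : Finset C)
    (hS : ∀ c : C, ∃ d : P, d ≠ 0 ∧ d • c ∈ Submodule.span P (S : Set C))
    (hsep : ∀ c : C, c ≠ 0 → ∃ l : C →ₗ[P] P, l c ≠ 0) : IsNoetherian P C := by
  classical
  let r : (C →ₗ[P] P) →ₗ[P] (S → P) :=
    { toFun := fun l s => l s
      map_add' := fun _ _ => rfl
      map_smul' := fun _ _ => rfl }
  have hr : Function.Injective r := by
    rw [injective_iff_map_eq_zero]
    intro l hl
    ext c
    obtain ⟨d, hd, hdc⟩ := hS c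
    have h1 : ∀ x ∈ Submodule.span P (S : Set C), l x = 0 := by
      intro x hx
      have : Submodule.span P (S : Set C) ≤ LinearMap.ker l := by
        rw [Submodule.span_le]
        intro s hs
        exact congrFun hl ⟨s, hs⟩
      exact this hx
    have h2 := h1 _ hdc
    rw [map_smul, smul_eq_mul] at h2
    exact (mul_eq_zero.mp h2).resolve_left hd
  have : IsNoetherian P (C →ₗ[P] P) := isNoetherian_of_injective r hr
  obtain ⟨G, hG⟩ := (inferInstance : Module.Finite P (C →ₗ[P] P)).fg_top
  let ev : C →ₗ[P] (G → P) :=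
    { toFun := fun c g => g.1 c
      map_add' := fun _ _ => by ext; simp
      map_smul' := fun _ _ => by ext; simp }
  refine isNoetherian_of_injective ev ?_
  rw [injective_iff_map_eq_zero]
  intro c hc
  by_contra hne
  obtain ⟨l, hl⟩ := hsep c hne
  have : Submodule.span P (G : Set (C →ₗ[P] P)) ≤ LinearMap.ker (LinearMap.applyₗ (R := P) (M₂ := P) c) := by
    rw [Submodule.span_le]
    intro s hs
    exact congrFun hc ⟨s, hs⟩
  rw [hG] at this
  exact hl (this (Submodule.mem_top : l ∈ _))

theorem FN_field_functional (k F : Type*) [Field k] [Field F] (φ : k →+* F) (u : F) (hu : u ≠ 0) :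
    ∃ l : F →+ k, (∀ c d, l (φ c * d) = c * l d) ∧ l u ≠ 0 := by
  let := φ.toAlgebra
  have h : ¬ ∀ f : Module.Dual k F, f u = 0 := by
    rw [Module.forall_dual_apply_eq_zero_iff]; exact hu
  push Not at h
  obtain ⟨f, hf⟩ := h
  refine ⟨f.toAddMonoidHom, fun c d => ?_, hf⟩
  change f (φ c * d) = _
  have : φ c * d = c • d := by rw [Algebra.smul_def]; rfl
  rw [this, map_smul]; rfl

open MvPolynomial in
theorem FN_poly_functional (k : Type*) [Field k] (p e n : ℕ) [ExpChar k p]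
    (u : MvPolynomial (Fin n) k) (hu : u ≠ 0) :
    ∃ l : MvPolynomial (Fin n) k →+ MvPolynomial (Fin n) k,
      (∀ a b, l (a ^ p ^ e * b) = a * l b) ∧ l u ≠ 0 := by
  obtain ⟨α, hα⟩ := (MvPolynomial.ne_zero_iff).mp hu
  have hp : 0 < p := expChar_pos k p
  have hq : 0 < p ^ e := by positivity
  set q := p ^ e with hqdef
  obtain ⟨l, hl, hlu⟩ := FN_field_functional k k (iterateFrobenius k p e) _ hα
  let α0 : Fin n →₀ ℕ := Finsupp.equivFunOnFinite.symm fun i => α i % q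
  let α1 : Fin n →₀ ℕ := Finsupp.equivFunOnFinite.symm fun i => α i / q
  have hα01 : α0 + q • α1 = α := by
    ext i; simp [α0, α1, Nat.mod_add_div]
  let g : (Fin n →₀ ℕ) → (Fin n →₀ ℕ) := fun γ => α0 + q • γ
  have hg : Function.Injective g := by
    intro a b hab
    have : q • a = q • b := add_left_cancel hab
    ext i
    have := DFunLike.congr_fun this i
    simpa [hq.ne'] using this
  have hfin : ∀ f : MvPolynomial (Fin n) k, ∃ h : MvPolynomial (Fin n) k,
      ∀ γ, coeff γ h = l (coeff (g γ) f) := by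
    intro f
    have hf : Set.Finite {γ | l (coeff (g γ) f) ≠ 0} := by
      refine Set.Finite.subset (f.support.finite_toSet.preimage hg.injOn) ?_
      intro γ hγ
      simp only [Set.mem_preimage, Finset.mem_coe, mem_support_iff]
      intro h0
      exact hγ (by rw [h0, map_zero])
    refine ⟨∑ γ ∈ hf.toFinset, monomial γ (l (coeff (g γ) f)), fun γ => ?_⟩
    rw [coeff_sum]
    simp only [coeff_monomial]
    rw [Finset.sum_ite_eq' hf.toFinset γ]
    split_ifs with h
    · rfl
    · simp only [Set.Finite.mem_toFinset, Set.mem_ofPred_eq, not_not] at h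
      exact h.symm
  choose Λ hΛ using hfin
  let Λ' : MvPolynomial (Fin n) k →+ MvPolynomial (Fin n) k :=
    AddMonoidHom.mk' Λ (by intro a b; ext γ; simp [hΛ])
  refine ⟨Λ', fun a b => ?_, fun h0 => ?_⟩
  · induction a using MvPolynomial.induction_on' with
    | monomial γ c =>
      ext δ
      change coeff δ (Λ _) = coeff δ (_ * Λ _)
      rw [hΛ, monomial_pow, coeff_monomial_mul', coeff_monomial_mul', hΛ]
      have hiff : q • γ ≤ g δ ↔ γ ≤ δ := by
        constructor
        · intro h i
          have h1 := h i
          simp only [g, α0, Finsupp.coe_add, Finsupp.coe_smul, Pi.add_apply, Pi.smul_apply,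
            smul_eq_mul, Finsupp.equivFunOnFinite_symm_apply_apply] at h1
          have h2 := Nat.mod_lt (α i) hq
          by_contra h3
          push Not at h3
          have : q * (δ i + 1) ≤ q * γ i := Nat.mul_le_mul_left _ h3
          rw [mul_add, mul_one] at this
          omega
        · intro h i
          have := Nat.mul_le_mul_left q (h i)
          simp only [g, Finsupp.coe_add, Finsupp.coe_smul, Pi.add_apply, Pi.smul_apply,
            smul_eq_mul]
          omega
      by_cases h : γ ≤ δ
      · rw [if_pos (hiff.mpr h), if_pos h]
        have h1 : g δ - q • γ = g (δ - γ) := by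
          ext i
          have := Nat.mul_le_mul_left q (h i)
          simp only [g, Finsupp.coe_add, Finsupp.coe_smul, Pi.add_apply, Pi.smul_apply,
            smul_eq_mul, Finsupp.coe_tsub, Pi.sub_apply, Nat.mul_sub]
          omega
        rw [h1, ← hl, iterateFrobenius_def]
      · rw [if_neg (mt hiff.mp h), if_neg h, map_zero]
    | add a a' ha ha' =>
      have : (a + a') ^ q = a ^ q + a' ^ q := add_pow_expChar_pow a a' p e
      rw [this, add_mul, map_add, ha, ha', add_mul]
  · apply hlu
    have h1 : coeff α1 (Λ u) = 0 := by
      change Λ u = 0 at h0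
      rw [h0, coeff_zero]
    rw [hΛ] at h1
    rwa [show g α1 = α from hα01] at h1


/-- The `p ^ e`-th roots of `E` inside an extension field. -/
noncomputable def FNroots (E Ω : Type*) [Field E] [Field Ω] [Algebra E Ω] (p e : ℕ) [ExpChar Ω p] :
    IntermediateField E Ω :=
  Subfield.toIntermediateField ((algebraMap E Ω).fieldRange.comap (iterateFrobenius Ω p e)) (by
    intro x
    refine ⟨x ^ p ^ e, ?_⟩
    simp [iterateFrobenius_def])

theorem FN_mem_roots {E Ω : Type*} [Field E] [Field Ω] [Algebra E Ω] {p e : ℕ} [ExpChar Ω p]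
    {w : Ω} : w ∈ FNroots E Ω p e ↔ ∃ y : E, algebraMap E Ω y = w ^ p ^ e := Iff.rfl

theorem FN_sep {E Ω : Type*} [Field E] [Field Ω] [Algebra E Ω] [IsAlgClosed Ω] (p e : ℕ)
    [ExpChar E p] [ExpChar Ω p] (w : Ω) (hw : IsSeparable E (w ^ p ^ e)) :
    IsSeparable (FNroots E Ω p e) w := by
  classical
  have hp : 0 < p := expChar_pos Ω p
  have hq : 0 < p ^ e := by positivity
  have hinj : Function.Injective (iterateFrobenius Ω p e) := (iterateFrobenius Ω p e).injective
  -- the root map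
  have hex : ∀ y : E, ∃ z : FNroots E Ω p e, (z : Ω) ^ p ^ e = algebraMap E Ω y := by
    intro y
    obtain ⟨z, hz⟩ := IsAlgClosed.exists_pow_nat_eq (algebraMap E Ω y) hq
    exact ⟨⟨z, FN_mem_roots.mpr ⟨y, hz.symm⟩⟩, hz⟩
  choose θ hθ using hex
  have key : ∀ {a b : FNroots E Ω p e}, (a : Ω) ^ p ^ e = (b : Ω) ^ p ^ e → a = b := by
    intro a b h
    apply Subtype.ext
    apply hinj
    simpa [iterateFrobenius_def] using h
  let Θ : E →+* FNroots E Ω p e :=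
    { toFun := θ
      map_one' := key (by rw [hθ]; simp)
      map_mul' := fun a b => key (by
        rw [hθ]; push_cast; rw [mul_pow, hθ, hθ])
      map_zero' := key (by rw [hθ]; simpa using (zero_pow hq.ne').symm)
      map_add' := fun a b => key (by
        rw [hθ]; push_cast; rw [add_pow_expChar_pow, hθ, hθ]) }
  have hsep : ((minpoly E (w ^ p ^ e)).map Θ).Separable := Polynomial.Separable.map hw
  refine Polynomial.Separable.of_dvd hsep (minpoly.dvd _ _ ?_)
  have h1 : (Polynomial.aeval w ((minpoly E (w ^ p ^ e)).map Θ)) ^ p ^ e = 0 := by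
    have h2 := minpoly.aeval E (w ^ p ^ e)
    rw [Polynomial.aeval_def, Polynomial.eval₂_map]
    rw [← iterateFrobenius_def, Polynomial.hom_eval₂, iterateFrobenius_def]
    rw [Polynomial.aeval_def] at h2
    have h3 : (iterateFrobenius Ω p e).comp ((algebraMap (FNroots E Ω p e) Ω).comp Θ)
        = algebraMap E Ω := RingHom.ext fun y => hθ y
    rw [h3]
    exact h2
  exact pow_eq_zero_iff hq.ne' |>.mp h1

theorem FN_exponent (E L : Type*) [Field E] [Field L] [Algebra E L] [FiniteDimensional E L]
    (p : ℕ) [ExpChar E p] (S : Finset L) : ∃ e, ∀ l ∈ S, IsSeparable E (l ^ p ^ e) := by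
  have h : ∀ l : L, ∃ e, IsSeparable E (l ^ p ^ e) := by
    intro l
    have h1 := (isPurelyInseparable_iff_pow_mem (separableClosure E L) p).mp
      (separableClosure.isPurelyInseparable E L) l
    obtain ⟨e, ⟨y, hy⟩⟩ := h1
    refine ⟨e, ?_⟩
    rw [← hy]
    exact mem_separableClosure_iff.mp y.2
  choose e he using h
  refine ⟨S.sup e, fun l hl => ?_⟩
  obtain ⟨d, hd⟩ := Nat.exists_eq_add_of_le (Finset.le_sup (f := e) hl)
  rw [hd, pow_add, pow_mul]
  have := (mem_separableClosure_iff (F := E) (E := L)).mpr (he l)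
  exact mem_separableClosure_iff.mp (pow_mem this _)

theorem FN_main {P E L : Type*} [CommRing P] [IsDomain P] [IsNoetherianRing P]
    [IsIntegrallyClosed P] [Field E] [Field L] [Algebra P E] [IsFractionRing P E] [Algebra E L]
    [Algebra P L] [IsScalarTower P E L] [FiniteDimensional E L] (p : ℕ) [ExpChar P p]
    (hfun : ∀ (e : ℕ) (u : P), u ≠ 0 → ∃ l : P →+ P, (∀ a b, l (a ^ p ^ e * b) = a * l b) ∧ l u ≠ 0) :
    IsNoetherian P (integralClosure P L) := by
  classical
  obtain ⟨S, b, hb⟩ := FiniteDimensional.exists_is_basis_integral P E L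
  have : ExpChar E p := expChar_of_injective_algebraMap (IsFractionRing.injective P E) p
  have : ExpChar L p := expChar_of_injective_algebraMap (algebraMap E L).injective p
  let Ω := AlgebraicClosure L
  have : ExpChar Ω p := expChar_of_injective_algebraMap (algebraMap L Ω).injective p
  have hPE : Function.Injective (algebraMap P E) := IsFractionRing.injective P E
  have hPL : Function.Injective (algebraMap P L) := by
    rw [IsScalarTower.algebraMap_eq P E L]
    exact (algebraMap E L).injective.comp hPE
  obtain ⟨e, he⟩ := FN_exponent E L p (Finset.univ.image b)
  let E' := FNroots E Ω p e
  let L' : IntermediateField E' Ω := IntermediateField.adjoin E' (Set.range fun i => algebraMap L Ω (b i))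
  have hsepgen : ∀ i, IsSeparable E' (algebraMap L Ω (b i)) := by
    intro i
    apply FN_sep
    rw [← map_pow]
    have := he (b i) (by simp)
    unfold IsSeparable at this ⊢
    rwa [← minpoly.algebraMap_eq (algebraMap L Ω).injective] at this
  have : Algebra.IsSeparable E' L' := by
    rw [IntermediateField.isSeparable_adjoin_iff_isSeparable]
    rintro _ ⟨i, rfl⟩
    exact hsepgen i
  have : FiniteDimensional E' L' := by
    apply IntermediateField.finiteDimensional_adjoin
    rintro _ ⟨i, rfl⟩
    exact (hsepgen i).isIntegral
  have hL : ∀ x : L, algebraMap L Ω x ∈ L' := by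
    intro x
    rw [← b.sum_repr x, map_sum]
    refine sum_mem fun i _ => ?_
    rw [Algebra.smul_def, map_mul]
    refine mul_mem ?_ (IntermediateField.subset_adjoin _ _ ⟨i, rfl⟩)
    have : algebraMap L Ω (algebraMap E L (b.repr x i)) = algebraMap E' Ω (algebraMap E E' (b.repr x i)) := by
      rfl
    rw [this]
    exact L'.algebraMap_mem _
  have : IsScalarTower P E' Ω := IsScalarTower.of_algebraMap_eq fun _ => rfl
  let ι : L →ₐ[P] L' :=
    { toFun := fun x => ⟨algebraMap L Ω x, hL x⟩
      map_one' := Subtype.ext (map_one _)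
      map_mul' := fun _ _ => Subtype.ext (map_mul _ _ _)
      map_zero' := Subtype.ext (map_zero _)
      map_add' := fun _ _ => Subtype.ext (map_add _ _ _)
      commutes' := fun _ => rfl }
  have : IsScalarTower P L' Ω := IsScalarTower.of_algebraMap_eq fun _ => rfl
  have hιinj : Function.Injective ι := by
    intro a b hab
    exact (algebraMap L Ω).injective (congrArg Subtype.val hab)
  have hPalg : Algebra.IsAlgebraic P Ω := by
    have := IsLocalization.isAlgebraic (R := P) E (nonZeroDivisors P)
    have : Algebra.IsAlgebraic P L := Algebra.IsAlgebraic.trans P E L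
    exact Algebra.IsAlgebraic.trans P L Ω
  have hPΩ : Function.Injective (algebraMap P Ω) := by
    rw [IsScalarTower.algebraMap_eq P L Ω]
    exact (algebraMap L Ω).injective.comp hPL
  have hPL' : Function.Injective (algebraMap P L') := by
    intro a b hab
    exact hPΩ (congrArg (algebraMap L' Ω) hab)
  refine FN_torsionless (S := Finset.univ.image fun i => (⟨b i, hb i⟩ : integralClosure P L)) ?_ ?_
  · rintro ⟨c, hc⟩
    obtain ⟨d, hd⟩ := IsLocalization.exist_integer_multiples_of_finset (nonZeroDivisors P)
      (Finset.univ.image fun i => b.repr c i)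
    refine ⟨d, nonZeroDivisors.ne_zero d.2, ?_⟩
    have hd' : ∀ i, ∃ r : P, algebraMap P E r = (d : P) • b.repr c i := by
      intro i
      obtain ⟨r, hr⟩ := hd (b.repr c i) (by simp)
      exact ⟨r, hr⟩
    choose r hr using hd'
    have : (d : P) • (⟨c, hc⟩ : integralClosure P L) = ∑ i, r i • (⟨b i, hb i⟩ : integralClosure P L) := by
      apply Subtype.ext
      push_cast
      conv_lhs => rw [← b.sum_repr c, Finset.smul_sum]
      refine Finset.sum_congr rfl fun i _ => ?_
      rw [← smul_assoc, ← hr, algebraMap_smul]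
    rw [this]
    refine Submodule.sum_mem _ fun i _ => Submodule.smul_mem _ _ (Submodule.subset_span ?_)
    simp
  · rintro ⟨c0, hc0⟩ hne
    have hc0' : ι c0 ≠ 0 := by
      intro h
      apply hne
      apply Subtype.ext
      exact hιinj (by rw [h]; exact (map_zero ι).symm)
    obtain ⟨w, hw⟩ := Algebra.trace_surjective E' L' 1
    have halgL' : Algebra.IsAlgebraic P L' := by
      refine ⟨fun x => ?_⟩
      have := hPalg.isAlgebraic (x : Ω)
      exact (isAlgebraic_algebraMap_iff (algebraMap L' Ω).injective).mp this
    obtain ⟨y, hy, hyz⟩ := (halgL'.isAlgebraic ((ι c0)⁻¹ * w)).exists_integral_multiple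
    set z := y • ((ι c0)⁻¹ * w) with hz
    have htr0 : Algebra.trace E' L' (ι c0 * z) ≠ 0 := by
      have : ι c0 * z = algebraMap P E' y • w := by
        rw [hz, algebraMap_smul, mul_smul_comm, mul_inv_cancel_left₀ hc0']
      rw [this, map_smul, hw, smul_eq_mul, mul_one]
      intro h
      exact hy (hPΩ (by
        have := congrArg (algebraMap E' Ω) h
        rw [map_zero] at this
        rw [map_zero]; exact this))
    have hex : ∀ c : integralClosure P L, ∃ r : P,
        algebraMap P Ω r = (algebraMap E' Ω (Algebra.trace E' L' (ι c * z))) ^ p ^ e := by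
      intro c
      have h1 : _root_.IsIntegral P (ι c) := IsIntegral.map ι c.2
      have h2 : _root_.IsIntegral P (Algebra.trace E' L' (ι c * z)) :=
        Algebra.isIntegral_trace (h1.mul hyz)
      have h3 : _root_.IsIntegral P ((algebraMap E' Ω (Algebra.trace E' L' (ι c * z))) ^ p ^ e) :=
        (h2.algebraMap).pow _
      obtain ⟨t, ht⟩ := FN_mem_roots.mp (Algebra.trace E' L' (ι c * z)).2
      have ht' : algebraMap E Ω t = (algebraMap E' Ω (Algebra.trace E' L' (ι c * z))) ^ p ^ e := ht
      rw [← ht'] at h3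
      have h4 : _root_.IsIntegral P t := (isIntegral_algebraMap_iff (algebraMap E Ω).injective).mp h3
      obtain ⟨r, hr⟩ := IsIntegrallyClosed.isIntegral_iff.mp h4
      refine ⟨r, ?_⟩
      rw [← ht', ← hr]
      exact IsScalarTower.algebraMap_apply P E Ω r
    choose t ht using hex
    have ht0 : t ⟨c0, hc0⟩ ≠ 0 := by
      intro h
      have := ht ⟨c0, hc0⟩
      rw [h, map_zero] at this
      have := pow_eq_zero_iff (expChar_pow_pos Ω p e).ne' |>.mp this.symm
      apply htr0
      exact (algebraMap E' Ω).injective (by rw [map_zero]; exact this)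
    obtain ⟨l, hl, hl0⟩ := hfun e _ ht0
    refine ⟨{ toFun := fun c => l (t c), map_add' := fun c c' => ?_, map_smul' := fun a c => ?_ }, hl0⟩
    · rw [← map_add]
      congr 1
      apply hPΩ
      rw [map_add, ht, ht, ht, ← add_pow_expChar_pow, ← map_add, ← map_add, ← add_mul, ← map_add]
      rfl
    · rw [RingHom.id_apply, smul_eq_mul, ← hl]
      congr 1
      apply hPΩ
      rw [map_mul, map_pow, ht, ht, ← mul_pow]
      congr 1
      have : ι ((a • c : integralClosure P L) : L) * z = algebraMap P E' a • (ι c * z) := by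
        rw [algebraMap_smul, ← smul_mul_assoc, ← map_smul]
        rfl
      rw [this, map_smul, smul_eq_mul, map_mul]
      rfl

/-- Finiteness of normalization for finitely generated domains over a field. -/
theorem FN_finite {k A L : Type*} [Field k] [CommRing A] [IsDomain A] [Field L] [Algebra k A]
    [Algebra.FiniteType k A] [Algebra A L] [IsFractionRing A L] :
    Module.Finite A (integralClosure A L) := by
  obtain ⟨n, g, hg, hfin⟩ := exists_finite_inj_algHom_of_fg k A
  let P := MvPolynomial (Fin n) k
  let := g.toRingHom.toAlgebra
  let : Algebra P L := ((algebraMap A L).comp g.toRingHom).toAlgebra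
  have : IsScalarTower P A L := IsScalarTower.of_algebraMap_eq fun _ => rfl
  have : Module.Finite P A := hfin
  have : FaithfulSMul P A := (faithfulSMul_iff_algebraMap_injective P A).mpr hg
  let E := FractionRing P
  have hinj : Function.Injective (algebraMap P L) :=
    (IsFractionRing.injective A L).comp hg
  have : FaithfulSMul P L := (faithfulSMul_iff_algebraMap_injective P L).mpr hinj
  let : Algebra E L := FractionRing.liftAlgebra P L
  have : IsScalarTower P E L := FractionRing.isScalarTower_liftAlgebra P L
  have : FiniteDimensional E L := Module.Finite.of_isLocalization P A (Rₚ := E) (Sₚ := L) (nonZeroDivisors P)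
  obtain ⟨p, hp⟩ := ExpChar.exists k
  have : ExpChar P p := inferInstance
  have hN : IsNoetherian P (integralClosure P L) :=
    FN_main (P := P) (E := E) (L := L) p (fun e u hu => FN_poly_functional k p e n u hu)
  have : Algebra.IsIntegral P A := inferInstance
  let f : integralClosure A L →ₗ[P] integralClosure P L :=
    { toFun := fun x => ⟨x.1, isIntegral_trans (R := P) (A := A) x.1 x.2⟩
      map_add' := fun _ _ => rfl
      map_smul' := fun r x => Subtype.ext rfl }
  have : IsNoetherian P (integralClosure A L) := isNoetherian_of_injective f (by
    intro a b h
    exact Subtype.ext (congrArg (fun z : integralClosure P L => (z : L)) h))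
  exact Module.Finite.of_restrictScalars_finite P A _


theorem G_alg {k A B L : Type*} [Field k] [CommRing A] [IsDomain A] [CommRing B] [Field L]
    [Algebra A L] [IsFractionRing A L] (c : k →+* A) (hc : c.FiniteType) (φ : A →+* B)
    (hφ : φ.IsIntegral) (j : B →+* L) (hj : Function.Injective j)
    (hjφ : j.comp φ = algebraMap A L) : φ.Finite := by
  algebraize [c]
  let _ := φ.toAlgebra
  have hfin : Module.Finite A (integralClosure A L) := FN_finite (k := k)
  have : IsNoetherianRing A := Algebra.FiniteType.isNoetherianRing k A
  let ja : B →ₐ[A] L := AlgHom.mk j (fun a => by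
    change j (φ a) = _
    rw [← hjφ]; rfl)
  let g : B →ₐ[A] integralClosure A L := ja.codRestrict _ (fun b => by
    have hb : _root_.IsIntegral A b := hφ b
    exact hb.map ja)
  have hg : Function.Injective g.toLinearMap := by
    intro x y h
    apply hj
    exact congrArg Subtype.val h
  exact Module.Finite.of_injective g.toLinearMap hg

theorem G_ft {k : Type} [Field k] {X T : Scheme} [IsIntegral X] [IsIntegral T]
    (p : X ⟶ Spec (CommRingCat.of k)) [LocallyOfFiniteType p]
    (ν : T ⟶ X) [IsAffineHom ν] [UniversallyClosed ν]
    (hgen : ν.base (genericPoint T) = genericPoint X)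
    [IsIso (ν.stalkMap (genericPoint T))] : LocallyOfFiniteType ν := by
  have hint : IsIntegralHom ν := IsIntegralHom.iff_universallyClosed_and_isAffineHom.mpr
    ⟨inferInstance, inferInstance⟩
  suffices IsFinite ν by infer_instance
  rw [isFinite_iff]
  refine ⟨inferInstance, fun U hU => ?_⟩
  have hφ := hint.isIntegral_app U hU
  by_cases hne : Nonempty U
  · have hgU : genericPoint X ∈ U := ((genericPoint_spec X).mem_open_set_iff U.isOpen).mpr (by
      obtain ⟨x⟩ := hne
      exact ⟨x.1, trivial, x.2⟩)
    have hgV : genericPoint T ∈ ν ⁻¹ᵁ U := by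
      change ν.base _ ∈ U
      rw [hgen]; exact hgU
    have hneV : Nonempty (ν ⁻¹ᵁ U) := ⟨⟨_, hgV⟩⟩
    have : IsFractionRing Γ(X, U) X.functionField :=
      functionField_isFractionRing_of_isAffineOpen X U hU
    have hc := p.finiteType_appLE (isAffineOpen_top (Spec (CommRingCat.of k))) hU le_top
    have hc' : (RingHom.comp (p.appLE ⊤ U le_top).hom
        (Scheme.ΓSpecIso (CommRingCat.of k)).inv.hom).FiniteType := by
      refine RingHom.FiniteType.comp hc (RingHom.FiniteType.of_surjective _ ?_)
      exact (ConcreteCategory.bijective_of_isIso (Scheme.ΓSpecIso (CommRingCat.of k)).inv).2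
    let hs : genericPoint X ⤳ ν.base (genericPoint T) := by rw [hgen]
    let j : Γ(T, ν ⁻¹ᵁ U) ⟶ X.functionField :=
      T.presheaf.germ (ν ⁻¹ᵁ U) _ hgV ≫ inv (ν.stalkMap (genericPoint T)) ≫
        X.presheaf.stalkSpecializes hs
    have hj : ν.app U ≫ j = X.presheaf.germ U _ hgU := by
      simp only [j]
      rw [← Scheme.Hom.germ_stalkMap_assoc ν U (genericPoint T) hgV, IsIso.hom_inv_id_assoc]
      exact TopCat.Presheaf.germ_stalkSpecializes X.presheaf (U := U) (y := ν.base (genericPoint T))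
        hgV hs
    have h2 : IsIso (X.presheaf.stalkSpecializes hs) := by
      have := (X.presheaf.stalkCongr (.of_eq hgen)).isIso_hom
      exact this
    refine G_alg (L := X.functionField) _ hc' _ hφ j.hom ?_ ?_
    · have h1 := germ_injective_of_isIntegral T _ hgV
      have h3 := (ConcreteCategory.bijective_of_isIso (inv (ν.stalkMap (genericPoint T)) ≫
        X.presheaf.stalkSpecializes hs)).1
      simp only [j, CommRingCat.hom_comp]
      exact h3.comp h1
    · rw [← CommRingCat.hom_comp, hj]; rfl
  · have : Subsingleton Γ(X, U) := by
      have : U = ⊥ := by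
        ext x; simp only [TopologicalSpace.Opens.coe_bot, Set.mem_empty_iff_false, iff_false]
        intro hx; exact hne ⟨⟨x, hx⟩⟩
      subst this
      exact CommRingCat.subsingleton_of_isTerminal X.sheaf.isTerminalOfEmpty
    have : Subsingleton Γ(T, ν ⁻¹ᵁ U) := by
      apply subsingleton_of_zero_eq_one
      rw [← (ν.app U).hom.map_zero, ← (ν.app U).hom.map_one]
      congr 1
      exact Subsingleton.elim _ _
    exact RingHom.Finite.of_surjective _ (fun y => ⟨0, Subsingleton.elim _ _⟩)


theorem G_factor {X : Scheme} {R : CommRingCat} [IsLocalRing R] (f : Spec R ⟶ X) (x : X)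
    (hx : f.base (IsLocalRing.closedPoint R) = x) :
    ∃ φ : X.presheaf.stalk x ⟶ R, IsLocalHom φ.hom ∧ Spec.map φ ≫ X.fromSpecStalk x = f := by
  subst hx
  exact ⟨Scheme.stalkClosedPointTo f, inferInstance, Scheme.Spec_stalkClosedPointTo_fromSpecStalk f⟩

theorem G_lift {K : Type} [Field K] {X T : Scheme} [IsIntegral X] [IsIntegral T]
    (η : Spec (CommRingCat.of K) ⟶ X)
    (hη : ∀ x : (Spec (CommRingCat.of K)).carrier, η.base x = genericPoint X)
    (ν : T ⟶ X) (hgen : ν.base (genericPoint T) = genericPoint X)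
    [IsIso (ν.stalkMap (genericPoint T))] :
    ∃ ψ : T.presheaf.stalk (genericPoint T) ⟶ CommRingCat.of K,
      (Spec.map ψ ≫ T.fromSpecStalk (genericPoint T)) ≫ ν = η := by
  have : IsLocalRing (CommRingCat.of K) := inferInstanceAs (IsLocalRing K)
  obtain ⟨φ, -, hφ⟩ := G_factor η (ν.base (genericPoint T)) ((hη _).trans hgen.symm)
  refine ⟨inv (ν.stalkMap (genericPoint T)) ≫ φ, ?_⟩
  rw [Category.assoc, ← Scheme.SpecMap_stalkMap_fromSpecStalk, ← Spec.map_comp_assoc,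
    IsIso.hom_inv_id_assoc]
  exact hφ

theorem G_sub_inj {K : Type} [Field K] (O : ValuationSubring K) {B : CommRingCat}
    {a b : Spec (CommRingCat.of O) ⟶ Spec B}
    (h : Spec.map (CommRingCat.ofHom O.subtype) ≫ a =
      Spec.map (CommRingCat.ofHom O.subtype) ≫ b) : a = b := by
  rw [← Spec.map_preimage a, ← Spec.map_preimage b, ← Spec.map_comp, ← Spec.map_comp] at h
  have h2 := Spec.map_injective h
  rw [← Spec.map_preimage a, ← Spec.map_preimage b]
  congr 1
  ext x
  exact ConcreteCategory.congr_hom h2 x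

/-- The existence part of the valuative criterion for a valuation subring. -/
theorem G_exists {K : Type} [Field K] {X Y : Scheme} (f : X ⟶ Y) [UniversallyClosed f]
    (O : ValuationSubring K) (a : Spec (CommRingCat.of K) ⟶ X) (b : Spec (CommRingCat.of O) ⟶ Y)
    (h : a ≫ f = Spec.map (CommRingCat.ofHom O.subtype) ≫ b) :
    ∃ l : Spec (CommRingCat.of O) ⟶ X, Spec.map (CommRingCat.ofHom O.subtype) ≫ l = a ∧
      l ≫ f = b := by
  have hu : UniversallyClosed f := inferInstance
  rw [UniversallyClosed.eq_valuativeCriterion] at hu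
  obtain ⟨l, h1, h2⟩ := (hu.1 { R := O, K := K, i₁ := a, i₂ := b, commSq := ⟨h⟩ }).exists_lift
  exact ⟨l, h1, h2⟩

theorem G_ext_iff {k K : Type} [Field k] [Field K] [Algebra k K] {X T : Scheme}
    (p : X ⟶ Spec (CommRingCat.of k))
    (η : Spec (CommRingCat.of K) ⟶ X)
    (hηk : η ≫ p = Spec.map (CommRingCat.ofHom (algebraMap k K)))
    (ν : T ⟶ X) [UniversallyClosed ν] (ηT : Spec (CommRingCat.of K) ⟶ T) (hηT : ηT ≫ ν = η)
    (O : ValuationSubring K) (hkO : ∀ x : k, algebraMap k K x ∈ O) :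
    (∃ h : Spec (CommRingCat.of O) ⟶ X,
            Spec.map (CommRingCat.ofHom O.subtype) ≫ h = η ∧
            h ≫ p = Spec.map (CommRingCat.ofHom
              (RingHom.codRestrict (algebraMap k K) O.toSubring hkO : k →+* O))) ↔
    ∃ h : Spec (CommRingCat.of O) ⟶ T, Spec.map (CommRingCat.ofHom O.subtype) ≫ h = ηT := by
  constructor
  · rintro ⟨h, h1, -⟩
    obtain ⟨l, hl, -⟩ := G_exists ν O ηT h (by rw [hηT, h1])
    exact ⟨l, hl⟩
  · rintro ⟨l, hl⟩
    refine ⟨l ≫ ν, by rw [← Category.assoc, hl, hηT], ?_⟩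
    apply G_sub_inj O
    rw [← Category.assoc, ← Category.assoc, hl, hηT, hηk, ← Spec.map_comp]
    rfl

/-- Proper morphism to an affine scheme gives the algebra. -/
theorem G_back {k K : Type} [Field k] [Field K] [Algebra k K] {T : Scheme}
    (t : T ⟶ Spec (CommRingCat.of k)) (ηT : Spec (CommRingCat.of K) ⟶ T)
    (hη : ηT ≫ t = Spec.map (CommRingCat.ofHom (algebraMap k K)))
    (Aff : Scheme) (q : Aff ⟶ Spec (CommRingCat.of k)) (f : T ⟶ Aff) [IsAffine Aff]
    [LocallyOfFiniteType q] [IsProper f] (hf : f ≫ q = t) :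
    ∃ A : Subalgebra k K, A.FG ∧
      ∀ O : ValuationSubring K, (∀ x : k, algebraMap k K x ∈ O) →
        ((∃ h : Spec (CommRingCat.of O) ⟶ T, Spec.map (CommRingCat.ofHom O.subtype) ≫ h = ηT)
          ↔ ∀ a ∈ A, a ∈ O) := by
  let B : CommRingCat := Γ(Aff, ⊤)
  let e : Aff ≅ Spec B := Aff.isoSpec
  let κ : CommRingCat.of k ⟶ B := Spec.preimage (e.inv ≫ q)
  have hκ : Spec.map κ = e.inv ≫ q := Spec.map_preimage _
  have hκft : κ.hom.FiniteType := by
    have h : LocallyOfFiniteType (Spec.map κ) := by rw [hκ]; infer_instance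
    exact (HasRingHomProperty.Spec_iff (P := @LocallyOfFiniteType)).mp h
  let β : B ⟶ CommRingCat.of K := Spec.preimage (ηT ≫ f ≫ e.hom)
  have hβ : Spec.map β = ηT ≫ f ≫ e.hom := Spec.map_preimage _
  have hκβ : κ ≫ β = CommRingCat.ofHom (algebraMap k K) := by
    apply Spec.map_injective
    rw [Spec.map_comp, hβ, hκ, ← hη, ← hf]
    simp
  let _ := κ.hom.toAlgebra
  have hft : Algebra.FiniteType k B := hκft
  let βa : B →ₐ[k] K := AlgHom.mk β.hom (fun x => ConcreteCategory.congr_hom hκβ x)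
  refine ⟨βa.range, ?_, ?_⟩
  · rw [← Algebra.map_top]
    exact Subalgebra.FG.map _ hft.out
  · intro O hO
    constructor
    · rintro ⟨h, hh⟩ a ⟨b, rfl⟩
      let γ : B ⟶ CommRingCat.of O := Spec.preimage (h ≫ f ≫ e.hom)
      have hγ : γ ≫ CommRingCat.ofHom O.subtype = β := by
        apply Spec.map_injective
        rw [Spec.map_comp, hβ, ← hh, Spec.map_preimage]
        simp
      have : β.hom b = (γ.hom b).1 := (ConcreteCategory.congr_hom hγ b).symm
      change β.hom b ∈ O
      rw [this]
      exact (γ.hom b).2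
    · intro hA
      let γ : B ⟶ CommRingCat.of O := CommRingCat.ofHom
        (RingHom.codRestrict β.hom O.toSubring (fun b => hA _ ⟨b, rfl⟩))
      have hγ : γ ≫ CommRingCat.ofHom O.subtype = β := rfl
      obtain ⟨l, hl, -⟩ := G_exists f O ηT (Spec.map γ ≫ e.inv) (by
        rw [← Category.assoc, ← Spec.map_comp, hγ, hβ]; simp)
      exact ⟨l, hl⟩


theorem G_coeff {R F K : Type*} [CommRing R] [IsDomain R] [IsIntegrallyClosed R] [Field F]
    [Algebra R F] [IsFractionRing R F] [Field K] [Algebra F K] (a : K)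
    (h : ∀ O : ValuationSubring K, (∀ r : R, algebraMap F K (algebraMap R F r) ∈ O) → a ∈ O) :
    _root_.IsIntegral F a ∧ ∀ n, (minpoly F a).coeff n ∈ (algebraMap R F).range := by
  let _ : Algebra R K := ((algebraMap F K).comp (algebraMap R F)).toAlgebra
  have : IsScalarTower R F K := .of_algebraMap_eq' rfl
  have hcl : IsIntegrallyClosedIn (integralClosure R K).toSubring K :=
    inferInstanceAs (IsIntegrallyClosedIn (integralClosure R K) K)
  have ha : a ∈ (integralClosure R K).toSubring := by
    rw [Subring.eq_iInf_of_isIntegrallyClosedIn (R := (integralClosure R K).toSubring),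
      Subring.mem_iInf]
    rintro ⟨V, hV⟩
    exact h V (fun r => hV (algebraMap_mem (integralClosure R K) r))
  have ha' : _root_.IsIntegral R a := ha
  refine ⟨ha'.tower_top, fun n => ?_⟩
  rw [minpoly.isIntegrallyClosed_eq_field_fractions' F ha', Polynomial.coeff_map]
  exact ⟨_, rfl⟩

/-- A rational function that is regular at every point is a global section. -/
theorem G_glue {T : Scheme} [IsIntegral T] (y : T.functionField)
    (h : ∀ x : T, y ∈ (algebraMap (T.presheaf.stalk x) T.functionField).range) :
    ∃ s : Γ(T, ⊤), T.presheaf.germ ⊤ (genericPoint T) trivial s = y := by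
  have h' : ∀ x : T, ∃ (U : T.Opens) (_ : x ∈ U) (hg : genericPoint T ∈ U) (s : Γ(T, U)),
      T.presheaf.germ U (genericPoint T) hg s = y := by
    intro x
    obtain ⟨z, hz⟩ := h x
    obtain ⟨U, hU, s, rfl⟩ := T.presheaf.exists_germ_eq z
    refine ⟨U, hU, (genericPoint_specializes x).mem_open U.isOpen hU, s, ?_⟩
    rw [← hz]
    exact (TopCat.Presheaf.germ_stalkSpecializes_apply T.presheaf hU _ s).symm
  choose U hU hg s hs using h'
  obtain ⟨g, hgl, -⟩ := T.sheaf.existsUnique_gluing' U ⊤ (fun i => homOfLE le_top)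
    (fun x _ => TopologicalSpace.Opens.mem_iSup.mpr ⟨x, hU x⟩) s (by
      intro i j
      apply germ_injective_of_isIntegral T (genericPoint T) (U := U i ⊓ U j) ⟨hg i, hg j⟩
      refine (T.presheaf.germ_res_apply _ _ _ _).trans ?_
      refine Eq.trans ?_ (T.presheaf.germ_res_apply _ _ _ _).symm
      rw [hs, hs])
  refine ⟨g, ?_⟩
  have h1 := hgl (genericPoint T)
  rw [← hs (genericPoint T), ← h1]
  exact (T.presheaf.germ_res_apply _ _ _ _).symm

/-- The map from a stalk to the field. -/
noncomputable def Gsig {T : Scheme} [IsIntegral T] {K : CommRingCat}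
    (ψ : T.presheaf.stalk (genericPoint T) ⟶ K) (x : T) : T.presheaf.stalk x ⟶ K :=
  T.presheaf.stalkSpecializes (genericPoint_specializes x) ≫ ψ

theorem Gsig_spec {T : Scheme} [IsIntegral T] {K : CommRingCat}
    (ψ : T.presheaf.stalk (genericPoint T) ⟶ K) (x : T) :
    Spec.map (Gsig ψ x) ≫ T.fromSpecStalk x = Spec.map ψ ≫ T.fromSpecStalk (genericPoint T) := by
  rw [Gsig, Spec.map_comp, Category.assoc, Scheme.SpecMap_stalkSpecializes_fromSpecStalk]

theorem Gsig_mem {T : Scheme} [IsIntegral T] {K : Type} [Field K]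
    (ψ : T.presheaf.stalk (genericPoint T) ⟶ CommRingCat.of K) (x : T) (O : ValuationSubring K)
    (h : ∀ r, (Gsig ψ x).hom r ∈ O) :
    ∃ h : Spec (CommRingCat.of O) ⟶ T, Spec.map (CommRingCat.ofHom O.subtype) ≫ h =
      Spec.map ψ ≫ T.fromSpecStalk (genericPoint T) := by
  refine ⟨Spec.map (CommRingCat.ofHom ((Gsig ψ x).hom.codRestrict O.toSubring h)) ≫
    T.fromSpecStalk x, ?_⟩
  rw [← Gsig_spec ψ x, ← Spec.map_comp_assoc]
  rfl

/-- Elements lying in all valuation rings with a center are integral over global sections. -/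
theorem G_integral {T : Scheme} [IsIntegral T]
    (hn : ∀ x : T, IsIntegrallyClosed (T.presheaf.stalk x)) {K : Type} [Field K]
    (ψ : T.presheaf.stalk (genericPoint T) ⟶ CommRingCat.of K) (a : K)
    (ha : ∀ O : ValuationSubring K, (∃ x : T, ∀ r, (Gsig ψ x).hom r ∈ O) → a ∈ O) :
    ∃ P : Polynomial Γ(T, ⊤), P.Monic ∧
      P.eval₂ (ψ.hom.comp (T.presheaf.germ ⊤ (genericPoint T) trivial).hom) a = 0 := by
  let _ : Algebra T.functionField K := RingHom.toAlgebra ψ.hom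
  have key : ∀ x : T, _root_.IsIntegral T.functionField a ∧ ∀ n,
      (minpoly T.functionField a).coeff n ∈
        (algebraMap (T.presheaf.stalk x) T.functionField).range := by
    intro x
    have := hn x
    exact G_coeff (R := T.presheaf.stalk x) a (fun O hO => ha O ⟨x, hO⟩)
  have hi := (key (genericPoint T)).1
  let g := (T.presheaf.germ ⊤ (genericPoint T) trivial).hom
  have hlift : minpoly T.functionField a ∈ Polynomial.lifts g := by
    rw [Polynomial.lifts_iff_coeff_lifts]
    intro n
    obtain ⟨s, hs⟩ := G_glue _ (fun x => (key x).2 n)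
    exact ⟨s, hs⟩
  obtain ⟨P, hP, -, hm⟩ := Polynomial.lifts_and_natDegree_eq_and_monic hlift (minpoly.monic hi)
  refine ⟨P, hm, ?_⟩
  rw [← Polynomial.eval₂_map]
  change Polynomial.eval₂ _ a (P.map g) = 0
  rw [hP]
  exact minpoly.aeval T.functionField a


/-- Composition of a valuation ring with a valuation ring of its residue field. -/
theorem G_compose {K : Type*} [Field K] (V : ValuationSubring K)
    (Q : ValuationSubring (IsLocalRing.ResidueField V)) :
    ∃ W : ValuationSubring K, W ≤ V ∧ ∀ y : V, y.1 ∈ W ↔ IsLocalRing.residue V y ∈ Q := by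
  let S : Subring K := (Q.toSubring.comap (IsLocalRing.residue V)).map V.subtype
  have hS : ∀ y : V, y.1 ∈ S ↔ IsLocalRing.residue V y ∈ Q := by
    intro y
    constructor
    · rintro ⟨z, hz, hzy⟩
      have : z = y := Subtype.ext hzy
      subst this
      exact hz
    · intro hy
      exact ⟨y, hy, rfl⟩
  have hmain : ∀ y : V, y.1 ∈ S ∨ y.1⁻¹ ∈ S := by
    intro y
    by_cases h0 : IsLocalRing.residue V y = 0
    · left
      rw [hS, h0]
      exact Q.zero_mem
    · have hu : IsUnit y := by
        rwa [← IsLocalRing.residue_ne_zero_iff_isUnit]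
      obtain ⟨u, rfl⟩ := hu
      have h1 : (u : V).1 * ((u⁻¹ : Vˣ) : V).1 = 1 := congrArg Subtype.val u.mul_inv
      have h2 : (u : V).1⁻¹ = ((u⁻¹ : Vˣ) : V).1 := inv_eq_of_mul_eq_one_right h1
      rw [h2, hS, hS]
      have h3 : IsLocalRing.residue V ((u⁻¹ : Vˣ) : V) = (IsLocalRing.residue V u)⁻¹ := by
        apply eq_inv_of_mul_eq_one_left
        rw [← map_mul, u.inv_mul, map_one]
      rw [h3]
      exact Q.mem_or_inv_mem _
  refine ⟨⟨S, ?_⟩, ?_, hS⟩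
  · intro y
    rcases V.mem_or_inv_mem y with h | h
    · exact hmain ⟨y, h⟩
    · have := hmain ⟨y⁻¹, h⟩
      rw [inv_inv] at this
      exact this.symm
  · rintro y ⟨z, -, rfl⟩
    exact z.2

theorem G_dom {κ κ' : Type*} [Field κ] [Field κ'] (i : κ →+* κ') (R : ValuationSubring κ) :
    ∃ Q : ValuationSubring κ', ∀ u, i u ∈ Q ↔ u ∈ R := by
  obtain ⟨Q, hQ, hloc⟩ := IsLocalRing.exists_factor_valuationRing (i.comp R.subtype)
  refine ⟨Q, fun u => ⟨fun h => ?_, fun h => hQ ⟨u, h⟩⟩⟩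
  by_contra hu
  have hu0 : u ≠ 0 := by rintro rfl; exact hu R.zero_mem
  have hinv : u⁻¹ ∈ R := (R.mem_or_inv_mem u).resolve_left hu
  have hunit : IsUnit ((i.comp R.subtype).codRestrict Q.toSubring hQ ⟨u⁻¹, hinv⟩) := by
    refine IsUnit.of_mul_eq_one ⟨i u, h⟩ ?_
    apply Subtype.ext
    change i u⁻¹ * i u = 1
    rw [← map_mul, inv_mul_cancel₀ hu0, map_one]
  have h2 := hloc.map_nonunit _ hunit
  obtain ⟨w, hw⟩ := h2.exists_right_inv
  have h3 : u⁻¹ * w.1 = 1 := congrArg Subtype.val hw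
  have h4 : w.1 = u := by
    rw [← mul_one u, ← h3, mul_inv_cancel_left₀ hu0]
  exact hu (h4 ▸ w.2)

theorem G_alg2 {M K L R : Type*} [CommRing M] [IsLocalRing M] [Field K] [Field L] [CommRing R]
    [IsDomain R] [ValuationRing R] [Algebra R L] [IsFractionRing R L] (σ : M →+* K)
    (ρ : M →+* L) [IsLocalHom ρ] :
    ∃ (V W : ValuationSubring K) (hV : ∀ m, σ m ∈ V.toSubring), W ≤ V ∧
      IsLocalHom (σ.codRestrict V.toSubring hV) ∧
      ∀ m, σ m ∈ W ↔ ρ m ∈ (algebraMap R L).range := by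
  obtain ⟨V, hV, hloc⟩ := IsLocalRing.exists_factor_valuationRing σ
  let σV : M →+* V := σ.codRestrict V.toSubring hV
  have hlocV : IsLocalHom σV := hloc
  let RL : ValuationSubring L := (ValuationRing.valuation R L).valuationSubring
  have hRL : ∀ y, y ∈ RL ↔ y ∈ (algebraMap R L).range := ValuationRing.mem_integer_iff R L
  obtain ⟨Q, hQ⟩ := G_dom (IsLocalRing.ResidueField.map σV)
    (RL.comap (IsLocalRing.ResidueField.lift ρ))
  obtain ⟨W, hWV, hW⟩ := G_compose V Q
  refine ⟨V, W, hV, hWV, hloc, fun m => ?_⟩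
  rw [← hRL]
  have h1 := hW (σV m)
  rw [← IsLocalRing.ResidueField.map_residue, hQ, ValuationSubring.mem_comap,
    IsLocalRing.ResidueField.lift_residue_apply] at h1
  exact h1

theorem G_inj {R L : CommRingCat} (j : R ⟶ L) (hj : Function.Injective j.hom) {B : CommRingCat}
    {a b : Spec R ⟶ Spec B} (h : Spec.map j ≫ a = Spec.map j ≫ b) : a = b := by
  rw [← Spec.map_preimage a, ← Spec.map_preimage b, ← Spec.map_comp, ← Spec.map_comp] at h
  have h2 := Spec.map_injective h
  rw [← Spec.map_preimage a, ← Spec.map_preimage b]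
  congr 1
  ext x
  apply hj
  exact ConcreteCategory.congr_hom h2 x

theorem G_unique {K : Type} [Field K] {X : Scheme} {S : CommRingCat} (f : X ⟶ Spec S)
    [IsSeparated f] (O : ValuationSubring K) (a b : Spec (CommRingCat.of O) ⟶ X)
    (h : Spec.map (CommRingCat.ofHom O.subtype) ≫ a =
      Spec.map (CommRingCat.ofHom O.subtype) ≫ b) : a = b := by
  have hab : a ≫ f = b ≫ f := by
    apply G_sub_inj O
    rw [← Category.assoc, h, Category.assoc]
  have w : CommSq (Spec.map (CommRingCat.ofHom O.subtype) ≫ a)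
    (Spec.map (CommRingCat.ofHom (algebraMap O K))) f (a ≫ f) := ⟨by
      rw [Category.assoc]; rfl⟩
  have := IsSeparated.valuativeCriterion f { R := O, K := K, i₁ := _, i₂ := _, commSq := w }
  have e : (⟨a, rfl, rfl⟩ : w.LiftStruct) = ⟨b, h.symm, hab.symm⟩ := Subsingleton.elim _ _
  exact congrArg CommSq.LiftStruct.l e

theorem G_univ {T : Scheme} [IsIntegral T] {K : Type} [Field K]
    (ψ : T.presheaf.stalk (genericPoint T) ⟶ CommRingCat.of K) {S : CommRingCat}
    (f : T ⟶ Spec S) [IsSeparated f] (β : S ⟶ CommRingCat.of K)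
    (hβ : Spec.map β = (Spec.map ψ ≫ T.fromSpecStalk (genericPoint T)) ≫ f)
    (H : ∀ O : ValuationSubring K, (∀ s, β.hom s ∈ O) →
      ∃ h : Spec (CommRingCat.of O) ⟶ T, Spec.map (CommRingCat.ofHom O.subtype) ≫ h =
        Spec.map ψ ≫ T.fromSpecStalk (genericPoint T)) :
    ValuativeCriterion.Existence f := by
  rintro ⟨R, L, i₁, i₂, ⟨w⟩⟩
  have hLloc : IsLocalRing (CommRingCat.of L) := inferInstanceAs (IsLocalRing L)
  obtain ⟨x, hx⟩ : ∃ x : T, i₁.base (IsLocalRing.closedPoint L) = x := ⟨_, rfl⟩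
  obtain ⟨ρ, hρloc, hρ⟩ := G_factor i₁ x hx
  have hρloc' : IsLocalHom (S := L) ρ.hom := hρloc
  obtain ⟨V, W, hV, hWV, hVloc, hiff⟩ := G_alg2 (R := R) (K := K) (L := L) (Gsig ψ x).hom ρ.hom
  -- the ring of the target maps into `W`
  let δ : S ⟶ T.presheaf.stalk x := Spec.preimage (T.fromSpecStalk x ≫ f)
  have hδ : Spec.map δ = T.fromSpecStalk x ≫ f := Spec.map_preimage _
  have hδσ : δ ≫ Gsig ψ x = β := by
    apply Spec.map_injective
    rw [Spec.map_comp, hδ, hβ, ← Gsig_spec ψ x, Category.assoc]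
  have hδρ : δ ≫ ρ = Spec.preimage i₂ ≫ CommRingCat.ofHom (algebraMap R L) := by
    apply Spec.map_injective
    rw [Spec.map_comp, hδ, Spec.map_comp, Spec.map_preimage, ← w, ← hρ, Category.assoc]
  obtain ⟨h, hh⟩ := H W (fun s => by
    rw [← hδσ]
    change (Gsig ψ x).hom (δ.hom s) ∈ W
    rw [hiff]
    exact ⟨(Spec.preimage i₂).hom s, (ConcreteCategory.congr_hom hδρ s).symm⟩)
  -- compare on `V`
  let lV : Spec (CommRingCat.of V) ⟶ T :=
    Spec.map (CommRingCat.ofHom ((Gsig ψ x).hom.codRestrict V.toSubring hV)) ≫ T.fromSpecStalk x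
  have hlV : Spec.map (CommRingCat.ofHom V.subtype) ≫ lV =
      Spec.map ψ ≫ T.fromSpecStalk (genericPoint T) := by
    rw [← Gsig_spec ψ x, ← Spec.map_comp_assoc]
    rfl
  let j : CommRingCat.of W ⟶ CommRingCat.of V := CommRingCat.ofHom (Subring.inclusion hWV)
  have hj : j ≫ CommRingCat.ofHom V.subtype = CommRingCat.ofHom W.subtype := rfl
  have hVW : lV = Spec.map j ≫ h := by
    apply G_unique f V
    rw [hlV, ← Spec.map_comp_assoc, hj, hh]
  have hlVx : lV.base (IsLocalRing.closedPoint V) = x := by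
    have e1 : (Spec.map (CommRingCat.ofHom ((Gsig ψ x).hom.codRestrict V.toSubring hV))).base
      (IsLocalRing.closedPoint V) = IsLocalRing.closedPoint (T.presheaf.stalk x) :=
      IsLocalRing.comap_closedPoint (S := V) ((Gsig ψ x).hom.codRestrict V.toSubring hV)
    have e2 := T.fromSpecStalk_closedPoint (x := x)
    exact (congrArg (T.fromSpecStalk x).base e1).trans e2
  obtain ⟨c, hc⟩ : ∃ c : T, h.base (IsLocalRing.closedPoint W) = c := ⟨_, rfl⟩
  have hxc : x ⤳ c := by
    rw [← hlVx, ← hc, hVW]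
    exact (IsLocalRing.specializes_closedPoint (R := W)
      ((Spec.map j).base (IsLocalRing.closedPoint V))).map h.continuous
  have hWloc : IsLocalRing (CommRingCat.of W) := inferInstanceAs (IsLocalRing W)
  obtain ⟨τ, -, hτ⟩ := G_factor h c hc
  have hτσ : τ ≫ CommRingCat.ofHom W.subtype = Gsig ψ c := by
    apply Spec.map_injective
    rw [← cancel_mono (T.fromSpecStalk c), Gsig_spec, Spec.map_comp, Category.assoc, hτ, hh]
  let sp := T.presheaf.stalkSpecializes hxc
  have hsp : sp ≫ Gsig ψ x = Gsig ψ c := by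
    simp only [sp, Gsig]
    rw [← Category.assoc, TopCat.Presheaf.stalkSpecializes_comp]
  have hmem : ∀ s, (sp ≫ ρ).hom s ∈ (algebraMap R L).range := by
    intro s
    refine (hiff (sp.hom s)).mp ?_
    have e1 : (Gsig ψ x).hom (sp.hom s) = (τ.hom s).1 :=
      (ConcreteCategory.congr_hom hsp s).trans (ConcreteCategory.congr_hom hτσ s).symm
    rw [e1]
    exact (τ.hom s).2
  have hinj : Function.Injective (algebraMap R L) := IsFractionRing.injective R L
  let E : R ≃+* (algebraMap R L).range := RingEquiv.ofLeftInverse (f := algebraMap R L)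
    (Function.leftInverse_invFun hinj)
  let θ : T.presheaf.stalk c ⟶ CommRingCat.of R := CommRingCat.ofHom
    (E.symm.toRingHom.comp ((sp ≫ ρ).hom.codRestrict _ hmem))
  have hθ : θ ≫ CommRingCat.ofHom (algebraMap R L) = sp ≫ ρ := by
    ext s
    exact congrArg Subtype.val (E.apply_symm_apply ((sp ≫ ρ).hom.codRestrict _ hmem s))
  have t1 : Spec.map (CommRingCat.ofHom (algebraMap R L)) ≫ Spec.map θ ≫ T.fromSpecStalk c =
      i₁ := by
    rw [← Spec.map_comp_assoc, hθ, Spec.map_comp, Category.assoc,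
      Scheme.SpecMap_stalkSpecializes_fromSpecStalk, hρ]
  refine ⟨⟨⟨Spec.map θ ≫ T.fromSpecStalk c, t1, ?_⟩⟩⟩
  apply G_inj (CommRingCat.ofHom (algebraMap R L)) hinj
  rw [← w]
  have t2 := congrArg (· ≫ f) t1
  simpa only [Category.assoc] using t2


theorem G_mem_of_monic {G K : Type*} [CommRing G] [Field K] (γ : G →+* K) (P : Polynomial G)
    (hP : P.Monic) (a : K) (h0 : P.eval₂ γ a = 0) (O : ValuationSubring K)
    (hO : ∀ n, γ (P.coeff n) ∈ O) : a ∈ O := by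
  have hl : P.map γ ∈ Polynomial.lifts (algebraMap O K) := by
    rw [Polynomial.lifts_iff_coeff_lifts]
    intro n
    rw [Polynomial.coeff_map]
    exact ⟨⟨_, hO n⟩, rfl⟩
  obtain ⟨Q, hQ, -, hm⟩ := Polynomial.lifts_and_natDegree_eq_and_monic hl (hP.map γ)
  have hi : _root_.IsIntegral O a := ⟨Q, hm, by
    rw [Polynomial.eval₂_eq_eval_map, hQ, ← Polynomial.eval₂_eq_eval_map, h0]⟩
  obtain ⟨y, rfl⟩ := IsIntegrallyClosed.isIntegral_iff.mp hi
  exact y.2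

set_option maxHeartbeats 1000000 in
theorem G_forw {k K : Type} [Field k] [Field K] [Algebra k K] {T : Scheme} [IsIntegral T]
    (hn : ∀ x : T, IsIntegrallyClosed (T.presheaf.stalk x))
    (t : T ⟶ Spec (CommRingCat.of k)) [IsSeparated t] [LocallyOfFiniteType t] [QuasiCompact t]
    (ψ : T.presheaf.stalk (genericPoint T) ⟶ CommRingCat.of K)
    (hη : (Spec.map ψ ≫ T.fromSpecStalk (genericPoint T)) ≫ t =
      Spec.map (CommRingCat.ofHom (algebraMap k K)))
    (A : Subalgebra k K) (hA : A.FG)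
    (hAO : ∀ O : ValuationSubring K, (∀ x : k, algebraMap k K x ∈ O) →
        ((∃ h : Spec (CommRingCat.of O) ⟶ T, Spec.map (CommRingCat.ofHom O.subtype) ≫ h =
          Spec.map ψ ≫ T.fromSpecStalk (genericPoint T)) ↔ ∀ a ∈ A, a ∈ O)) :
    ∃ (Aff : Scheme) (q : Aff ⟶ Spec (CommRingCat.of k)) (f : T ⟶ Aff),
        IsAffine Aff ∧ LocallyOfFiniteType q ∧ QuasiCompact q ∧
        IsProper f ∧ f ≫ q = t := by
  classical
  obtain ⟨s, hs⟩ := hA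
  have hsA : ∀ a ∈ s, a ∈ A := fun a ha => hs ▸ Algebra.subset_adjoin ha
  let γ : Γ(T, ⊤) ⟶ CommRingCat.of K := T.presheaf.germ ⊤ (genericPoint T) trivial ≫ ψ
  have hP : ∀ a : s, ∃ P : Polynomial Γ(T, ⊤), P.Monic ∧ P.eval₂ γ.hom a.1 = 0 := by
    intro a
    refine G_integral hn ψ a.1 (fun O hO => ?_)
    obtain ⟨x, hx⟩ := hO
    have hk : Spec.preimage (T.fromSpecStalk x ≫ t) ≫ Gsig ψ x =
        CommRingCat.ofHom (algebraMap k K) := by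
      apply Spec.map_injective
      rw [Spec.map_comp, Spec.map_preimage, ← hη, ← Gsig_spec ψ x, Category.assoc]
    have hkO : ∀ c : k, algebraMap k K c ∈ O := by
      intro c
      have e : algebraMap k K c = (Gsig ψ x).hom ((Spec.preimage (T.fromSpecStalk x ≫ t)).hom c) :=
        (ConcreteCategory.congr_hom hk c).symm
      rw [e]
      exact hx _
    exact (hAO O hkO).mp (Gsig_mem ψ x O hx) a.1 (hsA a.1 a.2)
  choose P hPm hP0 using hP
  let κ : CommRingCat.of k ⟶ Γ(T, ⊤) := (Scheme.ΓSpecIso (CommRingCat.of k)).inv ≫ t.appTop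
  have hκ : T.toSpecΓ ≫ Spec.map κ = t := by
    simp only [κ]
    rw [Spec.map_comp, ← Category.assoc, ← Scheme.toSpecΓ_naturality, Category.assoc,
      toSpecΓ_SpecMap_ΓSpecIso_inv, Category.comp_id]
  let ι := Σ a : s, Fin ((P a).natDegree + 1)
  let F : CommRingCat.of (MvPolynomial ι k) ⟶ Γ(T, ⊤) :=
    CommRingCat.ofHom (MvPolynomial.eval₂Hom κ.hom (fun i => (P i.1).coeff i.2))
  let C : CommRingCat.of k ⟶ CommRingCat.of (MvPolynomial ι k) :=
    CommRingCat.ofHom MvPolynomial.C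
  have hFX : ∀ i : ι, (P i.1).coeff i.2 = F.hom (MvPolynomial.X i) := by
    intro i
    simp only [F, CommRingCat.hom_ofHom, MvPolynomial.eval₂Hom_X']
  have hCF : C ≫ F = κ := by
    ext x
    exact MvPolynomial.eval₂Hom_C _ _ x
  let f : T ⟶ Spec (CommRingCat.of (MvPolynomial ι k)) := T.toSpecΓ ≫ Spec.map F
  have hfq : f ≫ Spec.map C = t := by
    simp only [f]
    rw [Category.assoc, ← Spec.map_comp, hCF, hκ]
  have hCft : LocallyOfFiniteType (Spec.map C) := by
    refine (HasRingHomProperty.Spec_iff (P := @LocallyOfFiniteType)).mpr ?_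
    have : Algebra.FiniteType k (MvPolynomial ι k) := inferInstance
    exact (RingHom.finiteType_algebraMap).mpr this
  have hsep : IsSeparated f := by
    have : IsSeparated (f ≫ Spec.map C) := by rw [hfq]; infer_instance
    exact IsSeparated.of_comp f (Spec.map C)
  have hlft : LocallyOfFiniteType f := by
    have : LocallyOfFiniteType (f ≫ Spec.map C) := by rw [hfq]; infer_instance
    exact locallyOfFiniteType_of_comp f (Spec.map C)
  have hqc : QuasiCompact f := by
    have : QuasiCompact (f ≫ Spec.map C) := by rw [hfq]; infer_instance
    exact QuasiCompact.of_comp f (Spec.map C)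
  have hβ : Spec.map (F ≫ γ) = (Spec.map ψ ≫ T.fromSpecStalk (genericPoint T)) ≫ f := by
    simp only [f, γ, Spec.map_comp, Category.assoc]
    rw [Scheme.fromSpecStalk_toSpecΓ_assoc]
  have huc : UniversallyClosed f := by
    refine UniversallyClosed.of_valuativeCriterion f (G_univ ψ f (F ≫ γ) hβ ?_)
    intro O hO
    have hk : C ≫ F ≫ γ = CommRingCat.ofHom (algebraMap k K) := by
      apply Spec.map_injective
      rw [Spec.map_comp, hβ, Category.assoc, hfq, hη]
    have hkO : ∀ c : k, algebraMap k K c ∈ O := by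
      intro c
      have e : algebraMap k K c = (F ≫ γ).hom (C.hom c) :=
        (ConcreteCategory.congr_hom hk c).symm
      rw [e]
      exact hO _
    rw [hAO O hkO]
    let OA : Subalgebra k K := { O.toSubring with algebraMap_mem' := hkO }
    have hle : A ≤ OA := by
      rw [← hs]
      refine Algebra.adjoin_le ?_
      intro a ha
      refine G_mem_of_monic γ.hom (P ⟨a, ha⟩) (hPm _) a (hP0 ⟨a, ha⟩) O ?_
      intro n
      by_cases hn : n < (P ⟨a, ha⟩).natDegree + 1
      · have e := hFX ⟨⟨a, ha⟩, ⟨n, hn⟩⟩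
        have e2 := hO (MvPolynomial.X ⟨⟨a, ha⟩, ⟨n, hn⟩⟩)
        rw [CommRingCat.hom_comp, RingHom.comp_apply, ← e] at e2
        exact e2
      · rw [Polynomial.coeff_eq_zero_of_natDegree_lt (by omega), map_zero]
        exact O.zero_mem
    exact fun a ha => hle ha
  exact ⟨_, Spec.map C, f, inferInstance, hCft, inferInstance, ⟨⟩, hfq⟩

/-- Let `k` be a field, `K/k` a field extension, and `𝒳` a separated
integral scheme of finite type over `k` equipped with a `k`-morphism
`η : Spec K → 𝒳` hitting the generic point of `𝒳`.  Let `X` be the set of valuation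
subrings `O` of `K` with `k ⊆ O` such that `η` extends to a `k`-morphism
`Spec O → 𝒳`.  Then `X = {O : A ⊆ O}` for some finitely generated `k`-subalgebra
`A ⊆ K` if and only if the normalization of `𝒳` admits a proper `k`-morphism to an
affine `k`-scheme of finite type. -/
theorem affine_birational_space_iff_normalization_semiaffine
    (k K : Type) [Field k] [Field K] [Algebra k K]
    (𝒳 : Scheme) [AlgebraicGeometry.IsIntegral 𝒳]
    (p : 𝒳 ⟶ Spec (CommRingCat.of k))
    [IsSeparated p] [LocallyOfFiniteType p] [QuasiCompact p]
    (η : Spec (CommRingCat.of K) ⟶ 𝒳)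
    (hηk : η ≫ p = Spec.map (CommRingCat.ofHom (algebraMap k K)))
    (hηgen : ∀ x : (Spec (CommRingCat.of K)).carrier, η.base x = genericPoint 𝒳)
    (T : Scheme) [AlgebraicGeometry.IsIntegral T]
    (ν : T ⟶ 𝒳) (hν : IsNormalization ν) :
    (∃ A : Subalgebra k K, A.FG ∧
      ∀ O : ValuationSubring K, ∀ hkO : ∀ x : k, algebraMap k K x ∈ O,
        ((∃ h : Spec (CommRingCat.of O) ⟶ 𝒳,
            Spec.map (CommRingCat.ofHom O.subtype) ≫ h = η ∧
            h ≫ p = Spec.map (CommRingCat.ofHom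
              (RingHom.codRestrict (algebraMap k K) O.toSubring hkO : k →+* O)))
          ↔ ∀ a ∈ A, a ∈ O))
    ↔ (∃ (Aff : Scheme) (q : Aff ⟶ Spec (CommRingCat.of k)) (f : T ⟶ Aff),
        IsAffine Aff ∧ LocallyOfFiniteType q ∧ QuasiCompact q ∧
        IsProper f ∧ f ≫ q = ν ≫ p) := by
  obtain ⟨hn, haff, huc, hgen, hiso⟩ := hν
  have hft : LocallyOfFiniteType ν := G_ft p ν hgen
  obtain ⟨ψ, hψ⟩ := G_lift η hηgen ν hgen
  have hηT : (Spec.map ψ ≫ T.fromSpecStalk (genericPoint T)) ≫ ν ≫ p =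
      Spec.map (CommRingCat.ofHom (algebraMap k K)) := by
    rw [← Category.assoc, hψ, hηk]
  constructor
  · rintro ⟨A, hA, h⟩
    refine G_forw hn (ν ≫ p) ψ hηT A hA (fun O hkO => ?_)
    rw [← G_ext_iff p η hηk ν _ hψ O hkO]
    exact h O hkO
  · rintro ⟨Aff, q, f, h1, h2, h3, h4, h5⟩
    obtain ⟨A, hA, h⟩ := G_back (ν ≫ p) _ hηT Aff q f h5
    refine ⟨A, hA, fun O hkO => ?_⟩
    rw [G_ext_iff p η hηk ν _ hψ O hkO]
    exact h O hkO

end
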